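/- In Sym, for every composition I: Φ^I = Σ_{J ⪰ I} (−1)^{ℓ(J)−ℓ(I)} (π(I)/ℓ(J,I)) S^J and S^I = Σ_{J ⪰ I} (1/sp(J,I)) Φ^J. Here π(K) := k₁k₂⋯k_s denotes the product of the parts of a composition K, sp(K) := ℓ(K)!·π(K), and for J ⪰ I with canonical decomposition J = J₁⋯J_m into consecutive blocks with |J_p| = i_p, ℓ(J,I) := Π_p ℓ(J_p) and sp(J,I) := Π_p sp(J_p). -/

import Mathlib

open Finset

namespace NCSF

noncomputable section

/-- `Sym = ℚ⟨S₁,S₂,S₃,…⟩`, the free associative algebra over `ℚ` on countably many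
noncommuting generators, the generator of index `n : ℕ` representing `S (n+1)`. -/
abbrev Sym : Type := FreeAlgebra ℚ ℕ

/-- The complete homogeneous noncommutative symmetric functions: `S 0 = 1` and
`S (n+1)` is the `n`-th generator of the free algebra. -/
def S : ℕ → Sym
  | 0 => 1
  | n + 1 => FreeAlgebra.ι ℚ n

/-- `S^I = S_{i₁} ⋯ S_{i_r}` for a list `I = [i₁, …, i_r]`. -/
def SProd (L : List ℕ) : Sym := (L.map S).prod

/-- The set of partial sums `i₁ + ⋯ + i_k` (`1 ≤ k ≤ length`) of a list. -/
def psums (L : List ℕ) : Finset ℕ :=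
  (Finset.range L.length).image fun k => (L.take (k + 1)).sum

/-- The noncommutative ribbon Schur function
`R_I = ∑_{J ⪯ I} (−1)^{ℓ(I)−ℓ(J)} S^J`, the sum being over the compositions `J`
of `|I|` that are coarser than `I` (every partial sum of `J` is a partial sum of `I`). -/
def Ribbon (L : List ℕ) : Sym :=
  ∑ J : Composition L.sum,
    if psums J.blocks ⊆ psums L then ((-1 : ℚ) ^ (L.length - J.length)) • SProd J.blocks
    else 0


/-- The noncommutative power sums of the second kind
`Φ_n = ∑_{|J|=n} (−1)^{ℓ(J)−1} (n/ℓ(J)) S^J`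
(the coefficient of `tⁿ` in `n·log(1 + ∑_{k≥1} S_k t^k)`). -/
def Phi (n : ℕ) : Sym :=
  ∑ J : Composition n,
    ((-1 : ℚ) ^ (J.length - 1) * (n : ℚ) / (J.length : ℚ)) • SProd J.blocks

/-- `Φ^I = Φ_{i₁} ⋯ Φ_{i_r}`. -/
def PhiProd (L : List ℕ) : Sym := (L.map Phi).prod

/-- The number of positions of `J` whose cumulative sum is `≤ s`. -/
def countLe (J : List ℕ) (s : ℕ) : ℕ :=
  ((Finset.range J.length).filter fun k => (J.take (k + 1)).sum ≤ s).card

/-- `ℓ(J_p)`: the length of the `p`-th block (`0 ≤ p < ℓ(I)`) of the canonical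
decomposition of `J ⪰ I`. -/
def blockLen (J I : List ℕ) (p : ℕ) : ℕ :=
  countLe J ((I.take (p + 1)).sum) - countLe J ((I.take p).sum)

/-- `ℓ(J,I) = ∏_p ℓ(J_p)`. -/
def ellP (J I : List ℕ) : ℕ :=
  ∏ p ∈ Finset.range I.length, blockLen J I p

/-- `sp(J,I) = ∏_p sp(J_p)` where `sp(K) = ℓ(K)!·π(K)`; since the parts of the
blocks of `J` multiply to `π(J)`, this is `π(J)·∏_p ℓ(J_p)!`. -/
def spP (J I : List ℕ) : ℕ :=
  J.prod * ∏ p ∈ Finset.range I.length, Nat.factorial (blockLen J I p)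

/-- Compositions of `n` as lists. -/
def comps (n : ℕ) : Finset (List ℕ) := (Finset.univ : Finset (Composition n)).image (fun c => c.blocks)

lemma mem_comps {n : ℕ} {L : List ℕ} : L ∈ comps n ↔ L.sum = n ∧ ∀ i ∈ L, 0 < i := by
  simp only [comps, Finset.mem_image, Finset.mem_univ, true_and]
  constructor
  · rintro ⟨c, rfl⟩
    exact ⟨c.blocks_sum, fun i hi => c.blocks_pos hi⟩
  · rintro ⟨h1, h2⟩
    exact ⟨⟨L, fun {i} hi => h2 i hi, h1⟩, rfl⟩

lemma sum_comps {M : Type*} [AddCommMonoid M] (n : ℕ) (g : List ℕ → M) :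
    ∑ J : Composition n, g J.blocks = ∑ L ∈ comps n, g L := by
  unfold comps
  rw [Finset.sum_image]
  intro a _ b _ h
  exact Composition.ext h

lemma mem_psums {L : List ℕ} {x : ℕ} :
    x ∈ psums L ↔ ∃ A B, L = A ++ B ∧ A ≠ [] ∧ A.sum = x := by
  simp only [psums, Finset.mem_image, Finset.mem_range]
  constructor
  · rintro ⟨k, hk, rfl⟩
    refine ⟨L.take (k+1), L.drop (k+1), (List.take_append_drop _ _).symm, ?_, rfl⟩
    intro h
    have := congrArg List.length h
    simp at this
    simp [this] at hk
  · rintro ⟨A, B, rfl, hA, rfl⟩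
    have : 0 < A.length := List.length_pos_iff.mpr hA
    refine ⟨A.length - 1, by simp; omega, ?_⟩
    rw [Nat.sub_add_cancel this]
    simp

lemma psums_cons (a : ℕ) (L : List ℕ) :
    psums (a :: L) = insert a ((psums L).image (a + ·)) := by
  ext x
  simp only [psums, Finset.mem_insert, Finset.mem_image, Finset.mem_range, List.length_cons]
  constructor
  · rintro ⟨k, hk, rfl⟩
    cases k with
    | zero => left; simp
    | succ k => right; exact ⟨_, ⟨k, by omega, rfl⟩, by simp⟩
  · rintro (rfl | ⟨_, ⟨k, hk, rfl⟩, rfl⟩)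
    · exact ⟨0, by omega, by simp⟩
    · exact ⟨k+1, by omega, by simp⟩

lemma countLe_cons (b s : ℕ) (J : List ℕ) : countLe (b :: J) (b + s) = 1 + countLe J s := by
  unfold countLe
  rw [Finset.card_filter, Finset.card_filter, List.length_cons, Finset.sum_range_succ', add_comm]
  congr 1
  · simp
  · simp

lemma countLe_append (A J : List ℕ) (s : ℕ) :
    countLe (A ++ J) (A.sum + s) = A.length + countLe J s := by
  induction A with
  | nil => simp
  | cons a A ih =>
    rw [List.cons_append, List.sum_cons, add_assoc, countLe_cons, ih, List.length_cons]
    omega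

lemma countLe_zero (J : List ℕ) (h : ∀ i ∈ J, 0 < i) : countLe J 0 = 0 := by
  unfold countLe
  rw [Finset.card_eq_zero, Finset.filter_eq_empty_iff]
  intro k hk
  cases J with
  | nil => simp at hk
  | cons a J =>
    have := h a (by simp)
    simp; omega

lemma psums_append (A J : List ℕ) :
    psums (A ++ J) = psums A ∪ (psums J).image (A.sum + ·) := by
  induction A with
  | nil => simp [psums]
  | cons a A ih =>
    rw [List.cons_append, psums_cons, ih, psums_cons, Finset.insert_union, Finset.image_union,
      Finset.image_image, List.sum_cons]
    congr 3
    ext x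
    simp [add_assoc]

lemma psums_pos {L : List ℕ} (h : ∀ i ∈ L, 0 < i) {x : ℕ} (hx : x ∈ psums L) : 0 < x := by
  obtain ⟨A, B, rfl, hA, rfl⟩ := mem_psums.mp hx
  cases A with
  | nil => simp at hA
  | cons a A =>
    have := h a (by simp)
    simp; omega

lemma psums_le {L : List ℕ} {x : ℕ} (hx : x ∈ psums L) : x ≤ L.sum := by
  obtain ⟨A, B, rfl, hA, rfl⟩ := mem_psums.mp hx
  simp

lemma sum_mem_psums {L : List ℕ} (h : L ≠ []) : L.sum ∈ psums L :=
  mem_psums.mpr ⟨L, [], by simp, h, rfl⟩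

lemma psums_card {L : List ℕ} (h : ∀ i ∈ L, 0 < i) : (psums L).card = L.length := by
  induction L with
  | nil => simp [psums]
  | cons a L ih =>
    have hL : ∀ i ∈ L, 0 < i := fun i hi => h i (by simp [hi])
    rw [psums_cons, Finset.card_insert_of_notMem, Finset.card_image_of_injective, ih hL,
      List.length_cons]
    · exact fun x y hxy => by simpa using hxy
    · intro hm
      obtain ⟨x, hx, hx2⟩ := Finset.mem_image.mp hm
      have := psums_pos hL hx
      simp at hx2
      omega

lemma psums_sub_iff (A J I : List ℕ) (hA : ∀ i ∈ A, 0 < i) (hA0 : A ≠ []) 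
    (hI : ∀ i ∈ I, 0 < i) :
    psums (A.sum :: I) ⊆ psums (A ++ J) ↔ psums I ⊆ psums J := by
  rw [psums_cons, psums_append]
  constructor
  · intro h x hx
    have h1 := h (Finset.mem_insert_of_mem (Finset.mem_image_of_mem _ hx))
    have hp := psums_pos hI hx
    rcases Finset.mem_union.mp h1 with h2 | h2
    · have := psums_le h2
      omega
    · obtain ⟨y, hy, hxy⟩ := Finset.mem_image.mp h2
      have : y = x := by simpa using hxy
      exact this ▸ hy
  · intro h
    apply Finset.insert_subset
    · exact Finset.mem_union_left _ (sum_mem_psums hA0)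
    · exact (Finset.image_subset_image h).trans Finset.subset_union_right

/-- Product of the block weights. -/
def wt (F : ℕ → ℚ) (J I : List ℕ) : ℚ := ∏ p ∈ Finset.range I.length, F (blockLen J I p)

lemma wt_append (F : ℕ → ℚ) (A J I : List ℕ) (hJ : ∀ i ∈ J, 0 < i)
    (hA : ∀ i ∈ A, 0 < i) :
    wt F (A ++ J) (A.sum :: I) = F A.length * wt F J I := by
  unfold wt
  rw [List.length_cons, Finset.prod_range_succ', mul_comm]
  congr 1
  · congr 1
    unfold blockLen
    have h1 : ((A.sum :: I).take (0+1)).sum = A.sum + 0 := by simp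
    have h2 : ((A.sum :: I).take 0).sum = 0 := by simp
    rw [h1, h2, countLe_append, countLe_zero J hJ, countLe_zero]
    · simp
    · intro i hi
      rcases List.mem_append.mp hi with h | h
      · exact hA i h
      · exact hJ i h
  · apply Finset.prod_congr rfl
    intro p _
    congr 1
    unfold blockLen
    simp only [List.take_succ_cons, List.sum_cons]
    rw [countLe_append]
    rw [countLe_append]
    omega

lemma structural (F : ℕ → ℚ) (X : ℕ → Sym) (I : List ℕ) (hI : ∀ i ∈ I, 0 < i) :
    (I.map fun i => ∑ K ∈ comps i, F K.length • (K.map X).prod).prod =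
      ∑ J ∈ comps I.sum, if psums I ⊆ psums J then wt F J I • (J.map X).prod else 0 := by
  induction I with
  | nil =>
    have : comps ([] : List ℕ).sum = {[]} := by
      ext L
      rw [mem_comps, Finset.mem_singleton]
      constructor
      · rintro ⟨h1, h2⟩
        cases L with
        | nil => rfl
        | cons a L =>
          have := h2 a (by simp)
          simp at h1; omega
      · rintro rfl; simp
    rw [this]
    simp [psums, wt]
  | cons a I ih =>
    have hI' : ∀ i ∈ I, 0 < i := fun i hi => hI i (by simp [hi])
    have ha : 0 < a := hI a (by simp)
    rw [List.map_cons, List.prod_cons, ih hI', Finset.sum_mul_sum, ← Finset.sum_product']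
    have key : ∀ x ∈ comps a ×ˢ comps I.sum,
        (∀ i ∈ x.1, 0 < i) ∧ (∀ i ∈ x.2, 0 < i) ∧ x.1.sum = a ∧ x.2.sum = I.sum ∧ x.1 ≠ [] := by
      rintro ⟨A, J⟩ h
      rw [Finset.mem_product, mem_comps, mem_comps] at h
      refine ⟨h.1.2, h.2.2, h.1.1, h.2.1, ?_⟩
      rintro rfl
      have := h.1.1
      simp at this; omega
    refine Finset.sum_of_injOn (fun x => x.1 ++ x.2) ?_ ?_ ?_ ?_
    · rintro ⟨A, J⟩ h ⟨A', J'⟩ h' heq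
      obtain ⟨p1, p2, s1, s2, n1⟩ := key _ h
      obtain ⟨p1', p2', s1', s2', n1'⟩ := key _ h'
      simp only at *
      have nil_of : ∀ C : List ℕ, (∀ i ∈ C, 0 < i) → C.sum = 0 → C = [] := by
        intro C hC h0
        cases C with
        | nil => rfl
        | cons c C =>
          have := hC c (by simp)
          simp at h0; omega
      rcases List.append_eq_append_iff.mp heq with ⟨C, h1, h2⟩ | ⟨C, h1, h2⟩
      · have : C = [] := nil_of C (fun i hi => p1' i (by simp [h1, hi])) (by
          have := congrArg List.sum h1
          simp at this; omega)
        subst this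
        simp at h1 h2
        simp [h1, h2]
      · have : C = [] := nil_of C (fun i hi => p1 i (by simp [h1, hi])) (by
          have := congrArg List.sum h1
          simp at this; omega)
        subst this
        simp at h1 h2
        simp [h1, h2]
    · rintro ⟨A, J⟩ h
      obtain ⟨p1, p2, s1, s2, n1⟩ := key _ h
      simp only [Finset.mem_coe, mem_comps] at *
      refine ⟨by simp [s1, s2], ?_⟩
      intro i hi
      rcases List.mem_append.mp hi with h | h
      · exact p1 i h
      · exact p2 i h
    · intro L hL hn
      rw [if_neg]
      intro hsub
      have : a ∈ psums L := hsub (by rw [psums_cons]; simp)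
      obtain ⟨A, B, rfl, hA, hs⟩ := mem_psums.mp this
      apply hn
      rw [mem_comps] at hL
      refine ⟨(A, B), ?_, rfl⟩
      simp only [Finset.mem_coe, Finset.mem_product, mem_comps]
      have h1 := hL.1
      simp at h1
      exact ⟨⟨hs, fun i hi => hL.2 i (by simp [hi])⟩, ⟨by omega, fun i hi => hL.2 i (by simp [hi])⟩⟩
    · rintro ⟨A, J⟩ h
      obtain ⟨p1, p2, s1, s2, n1⟩ := key _ h
      simp only at *
      subst s1
      simp only [psums_sub_iff A J I p1 n1 hI', wt_append F A J I p2 p1]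
      split_ifs
      · rw [List.map_append, List.prod_append, smul_mul_smul_comm]
      · simp

open PowerSeries in
lemma coeff_pow_comps (X : ℕ → Sym) (l n : ℕ) :
    coeff n ((PowerSeries.mk fun k => if k = 0 then 0 else X k) ^ l) =
      ∑ K ∈ (comps n).filter (fun K => K.length = l), (K.map X).prod := by
  induction l generalizing n with
  | zero =>
    rw [pow_zero, coeff_one]
    split_ifs with h
    · subst h
      rw [Finset.sum_eq_single_of_mem []]
      · simp
      · simp [mem_comps]
      · intro b hb hb2
        simp at hb
        exact absurd hb.2 hb2
    · rw [Finset.sum_eq_zero]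
      intro K hK
      rw [Finset.mem_filter, mem_comps, List.length_eq_zero_iff] at hK
      obtain ⟨⟨h1, _⟩, rfl⟩ := hK
      simp at h1; omega
  | succ l ih =>
    rw [pow_succ', coeff_mul]
    simp only [ih, coeff_mk, ite_mul, zero_mul]
    rw [Finset.sum_ite, Finset.sum_const_zero, zero_add]
    simp only [Finset.mul_sum]
    rw [Finset.sum_sigma']
    refine Finset.sum_bij (fun x _ => x.1.1 :: x.2) ?_ ?_ ?_ ?_
    · rintro ⟨⟨a, b⟩, K⟩ h
      simp [mem_comps] at h ⊢
      obtain ⟨⟨h1, h2⟩, ⟨h3, h4⟩, h5⟩ := h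
      exact ⟨⟨by omega, by omega, h4⟩, h5⟩
    · rintro ⟨⟨a, b⟩, K⟩ h ⟨⟨a', b'⟩, K'⟩ h' heq
      simp [mem_comps] at h h' heq
      obtain ⟨rfl, rfl⟩ := heq
      have : b = b' := by omega
      subst this
      rfl
    · intro L hL
      cases L with
      | nil => simp at hL
      | cons a L =>
        simp [mem_comps] at hL
        refine ⟨⟨(a, L.sum), L⟩, ?_, rfl⟩
        simp [mem_comps]
        obtain ⟨⟨h1, h2, h3⟩, h4⟩ := hL
        exact ⟨⟨h1, by omega⟩, h3, h4⟩
    · rintro ⟨⟨a, b⟩, K⟩ h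
      simp

lemma length_le_of_mem {n : ℕ} {K : List ℕ} (h : K ∈ comps n) : K.length ≤ n := by
  rw [mem_comps] at h
  obtain ⟨rfl, h2⟩ := h
  exact List.length_le_sum_of_one_le K h2

open PowerSeries in
lemma sum_comps_coeff (X : ℕ → Sym) (c : ℕ → ℚ) (n : ℕ) :
    ∑ K ∈ comps n, c K.length • (K.map X).prod =
      ∑ l ∈ Finset.range (n + 1), c l •
        coeff n ((PowerSeries.mk fun k => if k = 0 then 0 else X k) ^ l) := by
  rw [← Finset.sum_fiberwise_of_maps_to (g := fun K : List ℕ => K.length)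
    (t := Finset.range (n+1))]
  · apply Finset.sum_congr rfl
    intro l _
    rw [coeff_pow_comps, Finset.smul_sum]
    apply Finset.sum_congr rfl
    intro K hK
    rw [(Finset.mem_filter.mp hK).2]
  · intro K hK
    have := length_le_of_mem hK
    simp; omega

open PowerSeries in
lemma coeff_pow_zero {R : Type*} [Ring R] (x : PowerSeries R) (hx : coeff 0 x = 0) (r a : ℕ) (h : a < r) :
    coeff a (x ^ r) = 0 := by
  induction r generalizing a with
  | zero => omega
  | succ r ih =>
    rw [pow_succ', coeff_mul]
    apply Finset.sum_eq_zero
    rintro ⟨i, j⟩ hij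
    rw [Finset.HasAntidiagonal.mem_antidiagonal] at hij
    simp only at *
    by_cases hi : i = 0
    · subst hi; rw [hx, zero_mul]
    · rw [ih j (by omega), mul_zero]

open PowerSeries in
/-- Substitution of a noncommutative series with zero constant term. -/
def sb (x : PowerSeries Sym) (f : PowerSeries ℚ) : PowerSeries Sym :=
  PowerSeries.mk fun n => ∑ r ∈ Finset.range (n + 1), coeff r f • coeff n (x ^ r)

open PowerSeries in
lemma coeff_sb (x : PowerSeries Sym) (hx : coeff 0 x = 0) (f : PowerSeries ℚ) (n N : ℕ) (h : n ≤ N) :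
    coeff n (sb x f) = ∑ r ∈ Finset.range (N + 1), coeff r f • coeff n (x ^ r) := by
  rw [sb, coeff_mk]
  apply Finset.sum_subset
  · intro r; simp; omega
  · intro r _ hr
    rw [coeff_pow_zero x hx r n (by simp at hr; omega), smul_zero]

open PowerSeries in
lemma sb_mul (x : PowerSeries Sym) (hx : coeff 0 x = 0) (f g : PowerSeries ℚ) :
    sb x (f * g) = sb x f * sb x g := by
  ext n
  rw [coeff_mul]
  have h1 : ∀ p ∈ Finset.HasAntidiagonal.antidiagonal n, coeff p.1 (sb x f) * coeff p.2 (sb x g) =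
      ∑ r ∈ Finset.range (n+1), ∑ s ∈ Finset.range (n+1),
        (coeff r f * coeff s g) • (coeff p.1 (x^r) * coeff p.2 (x^s)) := by
    rintro ⟨a, b⟩ h
    rw [Finset.HasAntidiagonal.mem_antidiagonal] at h
    simp only at *
    rw [coeff_sb x hx f a n (by omega), coeff_sb x hx g b n (by omega), Finset.sum_mul_sum]
    simp only [smul_mul_smul_comm]
  rw [Finset.sum_congr rfl h1, Finset.sum_comm]
  have h2 : ∀ r ∈ Finset.range (n+1), ∑ p ∈ Finset.HasAntidiagonal.antidiagonal n, ∑ s ∈ Finset.range (n+1),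
        (coeff r f * coeff s g) • (coeff p.1 (x^r) * coeff p.2 (x^s)) = 
        ∑ s ∈ Finset.range (n+1), (coeff r f * coeff s g) • coeff n (x^(r+s)) := by
    intro r _
    rw [Finset.sum_comm]
    apply Finset.sum_congr rfl
    intro s _
    rw [pow_add, coeff_mul, Finset.smul_sum]
  rw [Finset.sum_congr rfl h2, sb, coeff_mk]
  simp only [coeff_mul, Finset.sum_smul]
  rw [Finset.sum_sigma', ← Finset.sum_product']
  refine Finset.sum_of_injOn (fun y => y.2) ?_ ?_ ?_ ?_
  · rintro ⟨m, r, s⟩ h ⟨m', r', s'⟩ h' heq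
    simp at h h' heq
    obtain ⟨rfl, rfl⟩ := heq
    have : m = m' := by omega
    subst this
    rfl
  · rintro ⟨m, r, s⟩ h
    simp at h ⊢
    omega
  · rintro ⟨r, s⟩ h hn
    simp only
    rw [coeff_pow_zero x hx, smul_zero]
    by_contra hc
    apply hn
    refine ⟨⟨r+s, r, s⟩, ?_, rfl⟩
    simp
    omega
  · rintro ⟨m, r, s⟩ h
    simp at h
    simp only
    rw [h.2]

open PowerSeries in
lemma sb_pow (x : PowerSeries Sym) (hx : coeff 0 x = 0) (f : PowerSeries ℚ) (l : ℕ) :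
    sb x (f ^ l) = sb x f ^ l := by
  induction l with
  | zero =>
    ext n
    rw [sb, coeff_mk, pow_zero, pow_zero, Finset.sum_range_succ']
    simp [coeff_one]
  | succ l ih => rw [pow_succ, pow_succ, sb_mul x hx, ih]

open PowerSeries in
lemma exp_log : (exp ℚ).subst (log ℚ) = 1 + X := by
  set f := (exp ℚ).subst (log ℚ) with hf
  have h0 : coeff 0 f = 1 := by
    rw [hf, coeff_subst' HasSubst.log, finsum_eq_single _ 0]
    · simp
    · intro n hn
      simp [hn]
  have hd : d⁄dX ℚ f = f * d⁄dX ℚ (log ℚ) := by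
    rw [hf, derivative_subst HasSubst.log, derivative_exp]
  have hg : (1 + X) * d⁄dX ℚ (log ℚ) = 1 := by
    ext n
    rw [deriv_log, add_mul, one_mul]
    cases n with
    | zero => simp
    | succ n =>
      rw [map_add, coeff_succ_X_mul]
      simp [coeff_one, pow_succ]
  have hde : (1 + X) * d⁄dX ℚ f = f := by
    rw [hd, mul_left_comm, hg, mul_one]
  have hrec : ∀ n : ℕ, coeff (n+1) f * ((n:ℚ) + 1) + coeff n f * n = coeff n f := by
    intro n
    have := congrArg (coeff n) hde
    rw [add_mul, one_mul, map_add, coeff_derivative] at this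
    cases n with
    | zero => simpa using this
    | succ n =>
      rw [coeff_succ_X_mul, coeff_derivative] at this
      push_cast at this ⊢
      exact this
  have h1 : coeff 1 f = 1 := by
    have := hrec 0
    simpa [h0] using this
  have h2 : ∀ n : ℕ, coeff (n+2) f = 0 := by
    intro n
    induction n with
    | zero =>
      have := hrec 1
      push_cast at this
      norm_num at this ⊢
      linarith
    | succ n ih =>
      have := hrec (n+2)
      rw [ih] at this
      push_cast at this
      have h3 : ((n:ℚ) + 2 + 1) ≠ 0 := by positivity
      simpa [h3] using this
  ext n
  match n with
  | 0 => rw [h0]; simp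
  | 1 => rw [h1]; simp [coeff_one]
  | n+2 => rw [h2]; simp [coeff_one, coeff_X]

open PowerSeries in
lemma exp_log_coeff (r n : ℕ) (h : r ≤ n) :
    ∑ l ∈ Finset.range (n+1), ((l.factorial : ℚ))⁻¹ * coeff r (log ℚ ^ l) =
      coeff r (1 + X : PowerSeries ℚ) := by
  rw [← exp_log, coeff_subst' HasSubst.log, finsum_eq_sum_of_support_subset (s := Finset.range (n+1))]
  · simp [coeff_exp]
  · intro l hl
    by_contra hc
    apply hl
    have : r < l := by simp at hc; omega
    simp only
    rw [coeff_pow_zero (log ℚ) (by simp) l r this, smul_zero]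

lemma Phi_eq (n : ℕ) : Phi n =
    (n : ℚ) • ∑ K ∈ comps n, ((-1 : ℚ) ^ (K.length - 1) / K.length) • SProd K := by
  rw [Phi, Finset.smul_sum, ← sum_comps n]
  apply Finset.sum_congr rfl
  intro J _
  rw [smul_smul]
  congr 1
  simp only [Composition.length]
  ring

open PowerSeries in
lemma S_eq (n : ℕ) (hn : 0 < n) : S n =
    ∑ K ∈ comps n, ((K.length.factorial : ℚ))⁻¹ • (K.map fun k : ℕ => ((k:ℚ))⁻¹ • Phi k).prod := by
  set x : PowerSeries Sym := PowerSeries.mk fun k => if k = 0 then 0 else S k with hx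
  have hx0 : coeff 0 x = 0 := by simp [hx]
  have hP : (PowerSeries.mk fun k => if k = 0 then 0 else ((k:ℚ))⁻¹ • Phi k) = sb x (log ℚ) := by
    ext k
    rw [coeff_mk]
    split_ifs with h
    · subst h
      simp [sb]
    · rw [Phi_eq, smul_smul, inv_mul_cancel₀ (by exact_mod_cast h), one_smul]
      have : ∀ K ∈ comps k, ((-1 : ℚ) ^ (K.length - 1) / K.length) • SProd K =
          (fun l => coeff l (log ℚ)) K.length • (K.map S).prod := by
        intro K hK
        have hK0 : K.length ≠ 0 := by
          intro h0
          rw [List.length_eq_zero_iff] at h0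
          subst h0
          rw [mem_comps] at hK
          simp at hK
          omega
        simp only [coeff_log, if_neg hK0, SProd]
        congr 1
        obtain ⟨m, hm⟩ := Nat.exists_eq_succ_of_ne_zero hK0
        simp [hm, pow_succ]
      rw [Finset.sum_congr rfl this, sum_comps_coeff S (fun l => coeff l (log ℚ)), sb, coeff_mk]
  rw [sum_comps_coeff _ (fun l => ((l.factorial : ℚ))⁻¹), hP]
  simp only [← sb_pow x hx0]
  simp only [sb, coeff_mk, Finset.smul_sum, smul_smul]
  rw [Finset.sum_comm]
  simp only [← Finset.sum_smul]
  have : ∀ r ∈ Finset.range (n+1),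
      (∑ l ∈ Finset.range (n+1), ((l.factorial : ℚ))⁻¹ * coeff r (log ℚ ^ l)) • coeff n (x ^ r) =
      coeff r (1 + X : PowerSeries ℚ) • coeff n (x ^ r) := by
    intro r hr
    rw [exp_log_coeff r n (by simp at hr; omega)]
  rw [Finset.sum_congr rfl this, Finset.sum_eq_single_of_mem 1]
  · simp [hx, coeff_one, hn.ne']
  · simp; omega
  · intro r _ hr
    match r with
    | 0 => simp [coeff_one, hn.ne']
    | 1 => simp at hr
    | r+2 => simp [coeff_one, coeff_X]

lemma map_smul_prod (c : ℕ → ℚ) (X : ℕ → Sym) (L : List ℕ) :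
    (L.map fun k => c k • X k).prod = (L.map c).prod • (L.map X).prod := by
  induction L with
  | nil => simp
  | cons a L ih => simp only [List.map_cons, List.prod_cons, ih, smul_mul_smul_comm]

/-- **Transition between the bases `S^I` and `Φ^J`**: for every composition `I` of `n`,
`Φ^I = ∑_{J ⪰ I} (−1)^{ℓ(J)−ℓ(I)} (π(I)/ℓ(J,I)) S^J` and
`S^I = ∑_{J ⪰ I} (1/sp(J,I)) Φ^J`, where `π(I)` is the product of the parts of `I`. -/
theorem S_phi_transition (n : ℕ) (I : Composition n) :
    (PhiProd I.blocks =
      ∑ J : Composition n,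
        if psums I.blocks ⊆ psums J.blocks then
          ((-1 : ℚ) ^ (J.length - I.length) * (I.blocks.prod : ℚ) /
              (ellP J.blocks I.blocks : ℚ)) • SProd J.blocks
        else 0) ∧
    (SProd I.blocks =
      ∑ J : Composition n,
        if psums I.blocks ⊆ psums J.blocks then
          ((spP J.blocks I.blocks : ℚ))⁻¹ • PhiProd J.blocks
        else 0) := by
  have hpos : ∀ i ∈ I.blocks, 0 < i := fun i hi => I.blocks_pos hi
  have hcast : ∀ L : List ℕ, (L.map fun k : ℕ => (k : ℚ)).prod = ((L.prod : ℕ) : ℚ) := by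
    intro L
    induction L with
    | nil => simp
    | cons a L ih => rw [List.map_cons, List.prod_cons, List.prod_cons, ih, Nat.cast_mul]
  constructor
  · have h := structural (fun l => -((l : ℚ))⁻¹) (fun k => (-1 : ℚ) • S k) I.blocks hpos
    have h1 : ∀ i, Phi i = (i : ℚ) • ∑ K ∈ comps i,
        (-((K.length : ℚ))⁻¹) • (K.map fun k => (-1 : ℚ) • S k).prod := by
      intro i
      by_cases hi : i = 0
      · subst hi; simp [Phi_eq]
      rw [Phi_eq]
      congr 1
      apply Finset.sum_congr rfl
      intro K hK
      have hK0 : K.length ≠ 0 := by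
        intro h0
        rw [List.length_eq_zero_iff] at h0
        subst h0
        rw [mem_comps] at hK
        simp at hK
        omega
      rw [map_smul_prod (fun _ => (-1 : ℚ)), smul_smul, SProd]
      congr 1
      obtain ⟨m, hm⟩ := Nat.exists_eq_succ_of_ne_zero hK0
      simp [hm, pow_succ]
      ring
    have h2 : PhiProd I.blocks = ((I.blocks.prod : ℕ) : ℚ) • (I.blocks.map fun i =>
        ∑ K ∈ comps i, (-((K.length : ℚ))⁻¹) • (K.map fun k => (-1 : ℚ) • S k).prod).prod := by
      rw [PhiProd, ← hcast, ← map_smul_prod]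
      congr 1
      apply List.map_congr_left
      intro i _
      exact h1 i
    rw [h2, h, I.blocks_sum, ← sum_comps n, Finset.smul_sum]
    apply Finset.sum_congr rfl
    intro J _
    rw [smul_ite, smul_zero]
    split_ifs with hs
    · rw [map_smul_prod (fun _ => (-1 : ℚ)), smul_smul, smul_smul, SProd]
      congr 1
      have hle : I.blocks.length ≤ J.blocks.length := by
        rw [← psums_card hpos, ← psums_card (L := J.blocks) (fun i hi => J.blocks_pos hi)]
        exact Finset.card_le_card hs
      obtain ⟨d, hd⟩ := Nat.exists_eq_add_of_le hle
      have hw : wt (fun l => -((l : ℚ))⁻¹) J.blocks I.blocks =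
          (-1) ^ I.blocks.length * ((ellP J.blocks I.blocks : ℕ) : ℚ)⁻¹ := by
        unfold wt ellP
        push_cast
        rw [← Finset.prod_inv_distrib]
        simp only [neg_eq_neg_one_mul (_ : ℚ)⁻¹]
        rw [Finset.prod_mul_distrib]
        simp
      have hsq : ((-1 : ℚ) ^ I.blocks.length) * ((-1 : ℚ) ^ I.blocks.length) = 1 := by
        rw [← mul_pow]; simp
      rw [hw, List.map_const', List.prod_replicate]
      simp only [Composition.length]
      rw [hd, pow_add, Nat.add_sub_cancel_left, div_eq_mul_inv]
      linear_combination ((I.blocks.prod : ℕ) : ℚ) * (-1) ^ d *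
        ((ellP J.blocks I.blocks : ℕ) : ℚ)⁻¹ * hsq
    · rfl
  · have h := structural (fun l => ((l.factorial : ℚ))⁻¹) (fun k : ℕ => ((k : ℚ))⁻¹ • Phi k) I.blocks hpos
    have h2 : SProd I.blocks = (I.blocks.map fun i => ∑ K ∈ comps i,
        ((K.length.factorial : ℚ))⁻¹ • (K.map fun k : ℕ => ((k:ℚ))⁻¹ • Phi k).prod).prod := by
      rw [SProd]
      congr 1
      apply List.map_congr_left
      intro i hi
      exact S_eq i (hpos i hi)
    rw [h2, h, I.blocks_sum, ← sum_comps n]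
    apply Finset.sum_congr rfl
    intro J _
    split_ifs with hs
    · rw [map_smul_prod (fun k : ℕ => ((k : ℚ))⁻¹), smul_smul, PhiProd]
      congr 1
      have hinv : (J.blocks.map fun k : ℕ => ((k : ℚ))⁻¹).prod = ((J.blocks.prod : ℕ) : ℚ)⁻¹ := by
        generalize J.blocks = L
        induction L with
        | nil => simp
        | cons a L ih => simp [ih, mul_comm]
      rw [hinv]
      unfold wt spP
      push_cast
      rw [mul_inv, ← Finset.prod_inv_distrib, mul_comm]
    · rfl

end

end NCSF
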